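/- Let G and Π be groups and (Ψ, f) an abstract kernel for Π and G. Define θ(α,β,γ) := m₂(Ψ(α)(f(β,γ)), f(α,βγ)) − m₂(f(α,β), f(αβ,γ)) ∈ ℓ¹(G×G). Then for all α, β, γ, ζ ∈ Π, the element Ψ(α)_*(θ(β,γ,ζ)) − θ(αβ,γ,ζ) + θ(α,βγ,ζ) − θ(α,β,γζ) + θ(α,β,γ) of ℓ¹(G×G) belongs to the closure of the ℝ-linear span of B₂. (Hence θ induces a bounded 3-cocycle θ̄_{Ψ,f} of Π with coefficients in the reduced ℓ¹-homology H̄₂^{ℓ¹}(G,ℝ), representing the class [θ].) -/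

import Mathlib

noncomputable section

open scoped ENNReal

instance : Fact ((1 : ℝ≥0∞) ≤ 1) := ⟨le_rfl⟩

/-- Dirac element of `ℓ¹(G×G)`. -/
def dirac {G : Type*} [Group G] (x : G × G) : lp (fun _ : G × G => ℝ) 1 :=
  letI := Classical.decEq (G × G)
  lp.single 1 x 1

/-- `m(g) = Σ_{n≥1} 2⁻ⁿ · δ_{(g^{2^{n-1}}, g^{2^{n-1}})} ∈ ℓ¹(G×G)`. -/
def mm {G : Type*} [Group G] (g : G) : lp (fun _ : G × G => ℝ) 1 :=
  ∑' n : ℕ, ((1 : ℝ) / 2) ^ (n + 1) • dirac (g ^ 2 ^ n, g ^ 2 ^ n)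

/-- `m₂(g,h) = δ_{(g,h)} − m(g) + m(gh) − m(h) ∈ ℓ¹(G×G)`. -/
def m2 {G : Type*} [Group G] (g h : G) : lp (fun _ : G × G => ℝ) 1 :=
  dirac (g, h) - mm g + mm (g * h) - mm h

/-- The set of boundary elements of `ℓ¹(G×G)`. -/
def B2 (G : Type*) [Group G] : Set (lp (fun _ : G × G => ℝ) 1) :=
  {x | ∃ a b k : G, x = dirac (b, k) - dirac (a * b, k) + dirac (a, b * k) - dirac (a, b)}

/-- The isometric linear automorphism of `ℓ¹(G×G)` induced by an automorphism `Ψ` of `G`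
acting diagonally on the index set `G × G`. -/
def pushAut {G : Type*} [Group G] (Ψ : G ≃* G) (z : lp (fun _ : G × G => ℝ) 1) :
    lp (fun _ : G × G => ℝ) 1 :=
  ⟨fun uv => z (Ψ.symm uv.1, Ψ.symm uv.2), by
    apply memℓp_gen
    have hz : Summable fun uv : G × G => ‖z uv‖ ^ (1 : ℝ≥0∞).toReal :=
      (lp.memℓp z).summable (by norm_num)
    have he : Summable ((fun uv : G × G => ‖z uv‖ ^ (1 : ℝ≥0∞).toReal) ∘
        fun uv : G × G => ((Ψ.symm uv.1 : G), (Ψ.symm uv.2 : G))) := by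
      exact ((Equiv.prodCongr Ψ.symm.toEquiv Ψ.symm.toEquiv).summable_iff).mpr hz
    exact he⟩

/-- The 3-cochain `θ(α,β,γ) = m₂(Ψ(α)(f(β,γ)), f(α,βγ)) − m₂(f(α,β), f(αβ,γ))`. -/
def thetaChain {G P : Type*} [Group G] [Group P] (Ψ : P → G ≃* G) (f : P → P → G)
    (α β γ : P) : lp (fun _ : G × G => ℝ) 1 :=
  m2 (Ψ α (f β γ)) (f α (β * γ)) - m2 (f α β) (f (α * β) γ)

section BoundedCocycle

variable {G V : Type*} [Group G] [NormedAddCommGroup V] [NormedSpace ℝ V]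

/-- A bounded function that doubles under squaring vanishes. -/
lemma eq_zero_of_forall_map_le_of_double {X : Type*} {s : X → X} {d : X → V} {C : ℝ}
    (hC : ∀ x, ‖d x‖ ≤ C) (hd : ∀ x, d (s x) = (2 : ℝ) • d x) (x : X) : d x = 0 := by
  have hpow : ∀ n : ℕ, d (s^[n] x) = (2 : ℝ) ^ n • d x := by
    intro n
    induction n with
    | zero => simp
    | succ n ih => rw [Function.iterate_succ_apply', hd, ih, smul_smul, pow_succ']
  by_contra hx
  have hpos : 0 < ‖d x‖ := norm_pos_iff.mpr hx
  obtain ⟨n, hn⟩ := pow_unbounded_of_one_lt (C / ‖d x‖) (one_lt_two (α := ℝ))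
  have hle := hC (s^[n] x)
  rw [hpow, norm_smul, norm_pow, Real.norm_ofNat] at hle
  rw [div_lt_iff₀ hpos] at hn
  linarith

/-- A bounded `2`-cocycle with trivial coefficients that vanishes on the diagonal. -/
structure IsDiagonalFreeCocycle (ω : G → G → V) : Prop where
  cocycle : ∀ a b k, ω a b + ω (a * b) k = ω b k + ω a (b * k)
  self : ∀ g, ω g g = 0
  bounded : ∃ C : ℝ, ∀ g h, ‖ω g h‖ ≤ C

namespace IsDiagonalFreeCocycle

variable {ω : G → G → V} (hω : IsDiagonalFreeCocycle ω)
include hω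

lemma conj_comm (x g : G) : ω x g = ω (x * g * x⁻¹) x := by
  obtain ⟨C, hC⟩ := hω.bounded
  rw [← sub_eq_zero]
  refine eq_zero_of_forall_map_le_of_double (s := fun g : G => g * g)
    (d := fun g => ω x g - ω (x * g * x⁻¹) x) (C := C + C)
    (fun g => (norm_sub_le _ _).trans (add_le_add (hC _ _) (hC _ _))) (fun g => ?_) g
  set g' := x * g * x⁻¹ with hg'
  have hx : g' * x = x * g := by simp [hg']
  have hsq : x * (g * g) * x⁻¹ = g' * g' := by simp [hg', mul_assoc]
  have h1 := hω.cocycle x g g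
  have h2 := hω.cocycle g' x g
  have h3 := hω.cocycle g' g' x
  rw [hω.self] at h1 h3
  rw [hx] at h2 h3
  simp only [hsq]
  linear_combination (norm := module) h2 - h1 - h3

lemma eq_of_mul_eq {x g g' : G} (h : x * g = g' * x) : ω x g = ω g' x := by
  rw [hω.conj_comm x g, h, mul_inv_cancel_right]

lemma eq_zero_of_commute {g h : G} (hgh : Commute g h) : ω g h = 0 := by
  obtain ⟨C, hC⟩ := hω.bounded
  refine eq_zero_of_forall_map_le_of_double (X := {p : G × G // Commute p.1 p.2})
    (s := fun p => ⟨(p.1.1 * p.1.1, p.1.2 * p.1.2),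
      (p.2.mul_left p.2).mul_right (p.2.mul_left p.2)⟩)
    (d := fun p => ω p.1.1 p.1.2) (C := C) (fun p => hC _ _) ?_ ⟨(g, h), hgh⟩
  rintro ⟨⟨a, b⟩, hab⟩
  replace hab : a * b = b * a := hab
  have h1 := hω.cocycle a a (b * b)
  have h2 := hω.cocycle a b b
  have h3 := hω.cocycle (a * b) b a
  have h4 : ω a (a * (b * b)) = ω (a * b * b) a := hω.eq_of_mul_eq (by
    rw [mul_assoc a b b, mul_assoc a, mul_assoc b, ← hab, ← mul_assoc b, ← hab, mul_assoc])
  have h5 : ω a b = ω b a := hω.eq_of_mul_eq hab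
  rw [← hab, hω.self] at h3
  rw [hω.self] at h1 h2
  linear_combination (norm := module) h1 - h2 + h3 + h4 - h5

lemma mul_left_of_mem_center {k : G} (hk : k ∈ Subgroup.center G) (g h : G) :
    ω (k * g) h = ω g h := by
  have hz : ∀ y, ω k y = 0 := fun y =>
    hω.eq_zero_of_commute ((Subgroup.mem_center_iff.mp hk y).symm)
  simpa [hz] using hω.cocycle k g h

lemma mul_right_of_mem_center {k : G} (hk : k ∈ Subgroup.center G) (g h : G) :
    ω g (k * h) = ω g h := by
  have hk' := Subgroup.mem_center_iff.mp hk
  have hz : ω g k = 0 := hω.eq_zero_of_commute (hk' g)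
  have hz' : ω k h = 0 := hω.eq_zero_of_commute (hk' h).symm
  simpa [hz, hz', hk' g, hω.mul_left_of_mem_center hk] using (hω.cocycle g k h).symm

lemma congr_left {x y : G} (h : x * y⁻¹ ∈ Subgroup.center G) (g : G) : ω x g = ω y g := by
  simpa using hω.mul_left_of_mem_center h y g

lemma congr_right {x y : G} (h : x * y⁻¹ ∈ Subgroup.center G) (g : G) : ω g x = ω g y := by
  simpa using hω.mul_right_of_mem_center h g y

end IsDiagonalFreeCocycle

end BoundedCocycle

section AbstractKernel

variable {G P : Type*} [Group G] [Group P] {Ψ : P → G ≃* G} {f : P → P → G}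

/-- The obstruction of an abstract kernel is central. -/
lemma obstruction_mem_center
    (hkernel : ∀ (α β : P) (g : G), Ψ α (Ψ β g) = f α β * Ψ (α * β) g * (f α β)⁻¹)
    (α β γ : P) :
    Ψ α (f β γ) * f α (β * γ) * (f α β * f (α * β) γ)⁻¹ ∈ Subgroup.center G := by
  set X := Ψ α (f β γ) * f α (β * γ) with hX
  set Y := f α β * f (α * β) γ with hY
  have hconj : ∀ g, X * g * X⁻¹ = Y * g * Y⁻¹ := by
    intro g
    obtain ⟨g, rfl⟩ := (Ψ (α * β * γ)).surjective g
    have h1 : Ψ α (Ψ β (Ψ γ g)) = X * Ψ (α * β * γ) g * X⁻¹ := by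
      rw [hkernel β γ, map_mul, map_mul, hkernel α (β * γ), map_inv]
      simp only [hX, mul_assoc, mul_inv_rev]
    have h2 : Ψ α (Ψ β (Ψ γ g)) = Y * Ψ (α * β * γ) g * Y⁻¹ := by
      rw [hkernel α β, hkernel (α * β) γ]
      simp only [hY, mul_assoc, mul_inv_rev]
    exact h1.symm.trans h2
  refine Subgroup.mem_center_iff.mpr fun g => ?_
  have h := hconj (Y⁻¹ * g * Y)
  have h' : Y * (Y⁻¹ * g * Y) * Y⁻¹ = g := by group
  rw [h'] at h
  calc g * (X * Y⁻¹) = X * (Y⁻¹ * g * Y) * X⁻¹ * (X * Y⁻¹) := by rw [h]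
    _ = X * Y⁻¹ * g := by group

lemma IsDiagonalFreeCocycle.coboundary_eq_zero {V : Type*} [NormedAddCommGroup V]
    [NormedSpace ℝ V] {ω : G → G → V} (hω : IsDiagonalFreeCocycle ω)
    (hkernel : ∀ (α β : P) (g : G), Ψ α (Ψ β g) = f α β * Ψ (α * β) g * (f α β)⁻¹)
    (α β γ ζ : P) :
    (ω (Ψ α (Ψ β (f γ ζ))) (Ψ α (f β (γ * ζ))) - ω (Ψ α (f β γ)) (Ψ α (f (β * γ) ζ)))
      - (ω (Ψ (α * β) (f γ ζ)) (f (α * β) (γ * ζ)) - ω (f (α * β) γ) (f (α * β * γ) ζ))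
      + (ω (Ψ α (f (β * γ) ζ)) (f α (β * γ * ζ)) - ω (f α (β * γ)) (f (α * (β * γ)) ζ))
      - (ω (Ψ α (f β (γ * ζ))) (f α (β * (γ * ζ))) - ω (f α β) (f (α * β) (γ * ζ)))
      + (ω (Ψ α (f β γ)) (f α (β * γ)) - ω (f α β) (f (α * β) γ)) = 0 := by
  have k1 : Ψ α (Ψ β (f γ ζ)) * Ψ α (f β (γ * ζ)) *
      (Ψ α (f β γ) * Ψ α (f (β * γ) ζ))⁻¹ ∈ Subgroup.center G := by
    have h := Subgroup.mem_center_iff.mp (obstruction_mem_center hkernel β γ ζ)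
    refine Subgroup.mem_center_iff.mpr fun g => ?_
    obtain ⟨g, rfl⟩ := (Ψ α).surjective g
    simpa using congrArg (Ψ α) (h g)
  have k2 := obstruction_mem_center hkernel (α * β) γ ζ
  have k3 := obstruction_mem_center hkernel α (β * γ) ζ
  have k4 := obstruction_mem_center hkernel α β (γ * ζ)
  have k5 := obstruction_mem_center hkernel α β γ
  have hA : Ψ α (Ψ β (f γ ζ)) * f α β = f α β * Ψ (α * β) (f γ ζ) := by
    rw [hkernel]; group
  simp only [← mul_assoc α β γ, mul_assoc β γ ζ] at *
  generalize Ψ α (Ψ β (f γ ζ)) = A at *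
  generalize Ψ α (f β (γ * ζ)) = B at *
  generalize f α (β * (γ * ζ)) = C at *
  generalize f α β = F at *
  generalize Ψ (α * β) (f γ ζ) = A' at *
  generalize f (α * β) (γ * ζ) = J at *
  generalize f (α * β * γ) ζ = H at *
  generalize f (α * β) γ = K at *
  generalize Ψ α (f β γ) = L at *
  generalize f α (β * γ) = M at *
  generalize Ψ α (f (β * γ) ζ) = N at *
  have e1 := hω.cocycle A B C
  have e2 := hω.cocycle L N C
  have e3 := hω.cocycle L M H
  have e4 := hω.cocycle F K H
  have e5 := hω.cocycle A F J
  have e6 := hω.cocycle F A' J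
  have e7 := hω.eq_of_mul_eq hA.symm
  rw [hω.congr_left k1, hω.congr_right k4] at e1
  rw [hω.congr_right k3] at e2
  rw [hω.congr_left k5] at e3
  rw [hA] at e5
  rw [hω.congr_right k2] at e6
  linear_combination (norm := module) e1 - e2 + e3 - e4 - e5 + e6 - e7

end AbstractKernel

section Chains

variable {G : Type*} [Group G]

lemma norm_dirac (x : G × G) : ‖dirac x‖ = 1 := by
  classical
  simp [dirac, lp.norm_single]

lemma dirac_apply (x y : G × G) [Decidable (y = x)] : dirac x y = if y = x then 1 else 0 := by
  classical
  simp [dirac, Pi.single_apply]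

lemma norm_smul_dirac_pow (g : G) (n : ℕ) :
    ‖((1 : ℝ) / 2) ^ (n + 1) • dirac (g ^ 2 ^ n, g ^ 2 ^ n)‖ = 1 / 2 / 2 ^ n := by
  rw [norm_smul, norm_dirac, mul_one, norm_pow, Real.norm_of_nonneg (by norm_num), pow_succ']
  simp [div_eq_mul_inv]

lemma summable_mm (g : G) :
    Summable fun n : ℕ => ((1 : ℝ) / 2) ^ (n + 1) • dirac (g ^ 2 ^ n, g ^ 2 ^ n) := by
  refine Summable.of_norm ?_
  simp only [norm_smul_dirac_pow]
  exact summable_geometric_two' (1 / 2 * 2) |>.congr fun n => by ring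

lemma norm_mm_le (g : G) : ‖mm g‖ ≤ 1 := by
  refine tsum_of_norm_bounded (hasSum_geometric_two' 1) fun n => ?_
  rw [norm_smul_dirac_pow]

lemma mm_eq (g : G) :
    mm g = ((1 : ℝ) / 2) • dirac (g, g) + ((1 : ℝ) / 2) • mm (g * g) := by
  rw [mm, (summable_mm g).tsum_eq_zero_add, mm, ← (summable_mm (g * g)).tsum_const_smul]
  congr 1
  · simp
  · refine tsum_congr fun n => ?_
    rw [smul_smul, ← pow_succ' ((1 : ℝ) / 2), ← pow_two g, ← pow_mul, ← pow_succ']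

lemma m2_self (g : G) : m2 g g = 0 := by
  have h := mm_eq g
  rw [m2]
  linear_combination (norm := module) (-2 : ℝ) • h

lemma norm_m2_le (g h : G) : ‖m2 g h‖ ≤ 4 := by
  have h1 := norm_sub_le (dirac (g, h) - mm g + mm (g * h)) (mm h)
  have h2 := norm_add_le (dirac (g, h) - mm g) (mm (g * h))
  have h3 := norm_sub_le (dirac (g, h)) (mm g)
  rw [norm_dirac] at h3
  rw [m2]
  linarith [norm_mm_le g, norm_mm_le h, norm_mm_le (g * h)]

/-- `pushAut` as a linear isometry. -/
def pushAutIsometry (φ : G ≃* G) :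
    lp (fun _ : G × G => ℝ) 1 →ₗᵢ[ℝ] lp (fun _ : G × G => ℝ) 1 where
  toFun := pushAut φ
  map_add' _ _ := rfl
  map_smul' _ _ := rfl
  norm_map' z := by
    change ‖pushAut φ z‖ = ‖z‖
    rw [lp.norm_eq_tsum_rpow (by norm_num), lp.norm_eq_tsum_rpow (by norm_num)]
    congr 1
    exact (Equiv.prodCongr φ.symm.toEquiv φ.symm.toEquiv).tsum_eq
      fun uv => ‖z uv‖ ^ (1 : ℝ≥0∞).toReal

lemma pushAutIsometry_dirac (φ : G ≃* G) (g h : G) :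
    pushAutIsometry φ (dirac (g, h)) = dirac (φ g, φ h) := by
  classical
  ext ⟨u, v⟩
  change dirac (g, h) (φ.symm u, φ.symm v) = _
  simp only [dirac_apply, Prod.mk.injEq, MulEquiv.symm_apply_eq]

lemma pushAutIsometry_mm (φ : G ≃* G) (g : G) : pushAutIsometry φ (mm g) = mm (φ g) := by
  have h := (pushAutIsometry φ).toContinuousLinearMap.map_tsum (summable_mm g)
  simp only [LinearIsometry.coe_toContinuousLinearMap, map_smul, pushAutIsometry_dirac,
    map_pow] at h
  exact h

lemma pushAut_m2_sub_m2 (φ : G ≃* G) (a b c d : G) :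
    pushAut φ (m2 a b - m2 c d) = m2 (φ a) (φ b) - m2 (φ c) (φ d) := by
  change pushAutIsometry φ _ = _
  simp only [m2, map_add, map_sub, pushAutIsometry_dirac, pushAutIsometry_mm, map_mul]

/-- The closed subspace generated by the boundaries. -/
abbrev closedBoundaries (G : Type*) [Group G] : Submodule ℝ (lp (fun _ : G × G => ℝ) 1) :=
  (Submodule.span ℝ (B2 G)).topologicalClosure

instance : IsClosed (closedBoundaries G : Set (lp (fun _ : G × G => ℝ) 1)) :=
  Submodule.isClosed_topologicalClosure _

lemma isDiagonalFreeCocycle_mkQ_m2 :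
    IsDiagonalFreeCocycle fun g h : G => (closedBoundaries G).mkQ (m2 g h) where
  cocycle a b k := by
    rw [← map_add, ← map_add, eq_comm, ← sub_eq_zero, ← map_sub, Submodule.mkQ_apply,
      Submodule.Quotient.mk_eq_zero]
    refine Submodule.le_topologicalClosure _ (Submodule.subset_span ⟨a, b, k, ?_⟩)
    simp only [m2, mul_assoc]
    abel
  self g := by rw [m2_self, map_zero]
  bounded := ⟨4, fun g h => (Submodule.Quotient.norm_mk_le _ _).trans (norm_m2_le g h)⟩

end Chains

/-- the coboundary of the `ℓ¹`-chain-valued cochain `θ` associated to an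
abstract kernel `(Ψ, f)` takes values in the closure of the span of the boundaries `B₂`;
hence `θ` induces a bounded 3-cocycle of `Π` with coefficients in `H̄₂^{ℓ¹}(G,ℝ)`,
representing the class `[θ]`. -/
theorem stmt_18 {G P : Type*} [Group G] [Group P]
    (Ψ : P → G ≃* G) (f : P → P → G)
    (hkernel : ∀ (α β : P) (g : G),
      Ψ α (Ψ β g) = f α β * Ψ (α * β) g * (f α β)⁻¹) :
    ∀ α β γ ζ : P,
      pushAut (Ψ α) (thetaChain Ψ f β γ ζ) - thetaChain Ψ f (α * β) γ ζ
          + thetaChain Ψ f α (β * γ) ζ - thetaChain Ψ f α β (γ * ζ)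
          + thetaChain Ψ f α β γ ∈
        closure ((Submodule.span ℝ (B2 G) : Submodule ℝ _) :
          Set (lp (fun _ : G × G => ℝ) 1)) := by
  intro α β γ ζ
  rw [← Submodule.topologicalClosure_coe, SetLike.mem_coe,
    ← Submodule.Quotient.mk_eq_zero (closedBoundaries G), ← Submodule.mkQ_apply]
  simpa only [thetaChain, pushAut_m2_sub_m2, map_add, map_sub] using
    isDiagonalFreeCocycle_mkQ_m2.coboundary_eq_zero hkernel α β γ ζ
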